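/- If 𝒜 ⊆ [ω]^ω is an ω-hitting family, then ℬ = ⋃_{A ∈ 𝒜} [A]^ω, the family of all infinite subsets of members of 𝒜, is an ω-splitting family. -/

import Mathlib

open Set Topology

/-- `H` splits `A`: both `A ∩ H` and `A \ H` are infinite. -/
def Splits (H A : Set ℕ) : Prop := (A ∩ H).Infinite ∧ (A \ H).Infinite

/-- `ℋ` is ω-splitting: for each countable `𝒜 ⊆ [ω]^ω` some `H ∈ ℋ` splits
every member of `𝒜`. -/
def OmegaSplitting (ℋ : Set (Set ℕ)) : Prop :=
  ∀ 𝒜 : Set (Set ℕ), 𝒜.Countable → (∀ A ∈ 𝒜, A.Infinite) →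
    ∃ H ∈ ℋ, ∀ A ∈ 𝒜, Splits H A

/-- `ℋ` is ω-hitting: for each countable `𝒜 ⊆ [ω]^ω` some `H ∈ ℋ` has infinite
intersection with every member of `𝒜`. -/
def OmegaHitting (ℋ : Set (Set ℕ)) : Prop :=
  ∀ 𝒜 : Set (Set ℕ), 𝒜.Countable → (∀ A ∈ 𝒜, A.Infinite) →
    ∃ H ∈ ℋ, ∀ A ∈ 𝒜, (A ∩ H).Infinite

theorem exists_splits_seq (f : ℕ → Set ℕ) (hf : ∀ n, (f n).Infinite) :
    ∃ S : Set ℕ, ∀ n, Splits S (f n) := by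
  have hnext : ∀ n N : ℕ, ∃ x, x ∈ f n ∧ N < x := fun n N => by
    obtain ⟨x, hx, hN⟩ := (hf n).exists_gt N
    exact ⟨x, hx, hN⟩
  choose next hmem hlt using hnext
  let e : ℕ → ℕ := fun k => (Nat.unpair (k / 2)).1
  let g : ℕ → ℕ := fun k => Nat.rec (next (e 0) 0) (fun k r => next (e (k + 1)) r) k
  have hg : StrictMono g := strictMono_nat_of_lt_succ fun k => hlt (e (k + 1)) (g k)
  have hgm : ∀ k, g k ∈ f (e k) := by
    intro k
    cases k with
    | zero => exact hmem _ _
    | succ k => exact hmem _ _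
  refine ⟨{x | ∃ j, x = g (2 * j)}, fun n => ⟨?_, ?_⟩⟩
  · refine infinite_of_injective_forall_mem (f := fun m => g (2 * Nat.pair n m)) ?_ ?_
    · intro a b hab
      have h1 : 2 * Nat.pair n a = 2 * Nat.pair n b := hg.injective hab
      have h2 : Nat.pair n a = Nat.pair n b := by omega
      exact (Nat.pair_eq_pair.1 h2).2
    · intro m
      refine ⟨?_, Nat.pair n m, rfl⟩
      have h := hgm (2 * Nat.pair n m)
      simpa [e] using h
  · refine infinite_of_injective_forall_mem (f := fun m => g (2 * Nat.pair n m + 1)) ?_ ?_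
    · intro a b hab
      have h1 : 2 * Nat.pair n a + 1 = 2 * Nat.pair n b + 1 := hg.injective hab
      have h2 : Nat.pair n a = Nat.pair n b := by omega
      exact (Nat.pair_eq_pair.1 h2).2
    · intro m
      refine ⟨?_, ?_⟩
      · have h := hgm (2 * Nat.pair n m + 1)
        have h3 : (2 * Nat.pair n m + 1) / 2 = Nat.pair n m := by omega
        simpa only [e, h3, Nat.unpair_pair] using h
      · rintro ⟨j, hj⟩
        have h1 : 2 * Nat.pair n m + 1 = 2 * j := hg.injective hj
        omega

/-- If `𝒜 ⊆ [ω]^ω` is ω-hitting, then the family of all infinite subsets of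
members of `𝒜` is ω-splitting. -/
theorem stmt_10 (𝒜 : Set (Set ℕ)) (h𝒜 : ∀ A ∈ 𝒜, A.Infinite) (hh : OmegaHitting 𝒜) :
    OmegaSplitting {B : Set ℕ | B.Infinite ∧ ∃ A ∈ 𝒜, B ⊆ A} := by
  intro 𝒞 hc hinf
  obtain ⟨H, hH, hhit⟩ := hh (insert univ 𝒞) (hc.insert _) (by
    rintro A (rfl | hA)
    · exact infinite_univ
    · exact hinf A hA)
  obtain ⟨f, hf⟩ := (hc.insert univ).exists_eq_range (insert_nonempty _ _)
  have hfm : ∀ n, f n ∈ insert univ 𝒞 := fun n => hf ▸ mem_range_self n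
  obtain ⟨S, hS⟩ := exists_splits_seq (fun n => f n ∩ H) fun n => hhit _ (hfm n)
  have key : ∀ A ∈ insert univ 𝒞, Splits S (A ∩ H) := by
    intro A hA
    rw [hf] at hA
    obtain ⟨n, rfl⟩ := hA
    exact hS n
  refine ⟨H ∩ S, ⟨?_, H, hH, inter_subset_left⟩, fun A hA => ⟨?_, ?_⟩⟩
  · exact (key univ (mem_insert _ _)).1.mono fun x hx => ⟨hx.1.2, hx.2⟩
  · exact (key A (mem_insert_of_mem _ hA)).1.mono fun x hx => ⟨hx.1.1, hx.1.2, hx.2⟩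
  · exact (key A (mem_insert_of_mem _ hA)).2.mono fun x hx => ⟨hx.1.1, fun h => hx.2 h.2⟩
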